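/- For a supermodular set function V with V(∅) = 0, and any subset S ⊆ N with |S| = r, the proportional-share bound V(S) ≤ (r/|N|)·V(N) holds in expectation: E[V(S)] ≤ (r/c)·V(N) when S is drawn uniformly among r-element subsets; consequently the expected interaction difference ΔI = (r/c)·V(N) − E[V(S)] is nonnegative for supermodular payoffs. -/

import Mathlib

open Finset

open scoped BigOperators

/-!
Adding the players one at a time and paying each its marginal contribution gives weights `φ` with
`V N = V ∅ + ∑ x ∈ N, φ x`. By supermodularity a player's marginal contribution only grows with the
coalition it joins, so `V S ≤ V ∅ + ∑ x ∈ S, φ x` for every `S ⊆ N`. Averaging this over the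
`r`-subsets `S` finishes the proof, because each player belongs to `S` with probability `r / #N`.
-/

/-- Supermodular functions on a lattice, such as the payoff of a convex cooperative game on the
lattice of coalitions `Finset α`. -/
def IsSupermodular {L G : Type*} [Lattice L] [Add G] [LE G] (V : L → G) : Prop :=
  ∀ A B, V A + V B ≤ V (A ⊔ B) + V (A ⊓ B)

section Additive

variable {α G : Type*} [DecidableEq α] [AddCommGroup G] [PartialOrder G] [IsOrderedAddMonoid G]
  {V : Finset α → G}

theorem IsSupermodular.le_add_marginal (hV : IsSupermodular V) {a : α} {S T : Finset α}
    (hST : S ⊆ T) (ha : a ∉ T) : V (insert a S) ≤ V S + (V (insert a T) - V T) := by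
  have h_union : insert a S ⊔ T = insert a T := by
    rw [sup_eq_union, insert_union, union_eq_right.2 hST]
  have h_inter : insert a S ⊓ T = S := by
    rw [inf_eq_inter, insert_inter_of_notMem ha, inter_eq_left.2 hST]
  have h_super := hV (insert a S) T
  rw [h_union, h_inter] at h_super
  rwa [← add_sub_assoc, le_sub_iff_add_le, add_comm (V S)]

theorem IsSupermodular.exists_le_add_sum_and_eq_add_sum (hV : IsSupermodular V) (N : Finset α) :
    ∃ φ : α → G, (∀ S ⊆ N, V S ≤ V ∅ + ∑ x ∈ S, φ x) ∧ V N = V ∅ + ∑ x ∈ N, φ x := by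
  induction N using Finset.induction_on with
  | empty => exact ⟨0, by simp [subset_empty], by simp⟩
  | insert a N ha ih =>
    obtain ⟨φ, h_le, h_eq⟩ := ih
    set m := V (insert a N) - V N with hm
    have sum_of_notMem {S : Finset α} (hS : a ∉ S) :
        ∑ x ∈ S, Function.update φ a m x = ∑ x ∈ S, φ x := sum_update_of_notMem hS φ m
    have sum_insert_of_notMem {S : Finset α} (hS : a ∉ S) :
        ∑ x ∈ insert a S, Function.update φ a m x = ∑ x ∈ S, φ x + m := by
      rw [sum_insert hS, sum_of_notMem hS, Function.update_self, add_comm]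
    refine ⟨Function.update φ a m, fun S hS ↦ ?_, ?_⟩
    · by_cases haS : a ∈ S
      · obtain ⟨R, haR, rfl⟩ : ∃ R, a ∉ R ∧ insert a R = S :=
          ⟨S.erase a, notMem_erase a S, insert_erase haS⟩
        have hRN : R ⊆ N := (insert_subset_insert_iff haR).1 hS
        calc V (insert a R) ≤ V R + m := hV.le_add_marginal hRN ha
          _ ≤ V ∅ + ∑ x ∈ R, φ x + m := by gcongr; exact h_le R hRN
          _ = V ∅ + ∑ x ∈ insert a R, Function.update φ a m x := by
            rw [sum_insert_of_notMem haR, add_assoc]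
      · rw [sum_of_notMem haS]
        exact h_le S ((subset_insert_iff_of_notMem haS).1 hS)
    · rw [sum_insert_of_notMem ha, ← add_assoc, ← h_eq, hm, add_sub_cancel]

end Additive

theorem card_mul_card_filter_mem_powersetCard {α : Type*} [DecidableEq α] {N : Finset α} {x : α}
    (hx : x ∈ N) (r : ℕ) : #N * #{S ∈ N.powersetCard r | x ∈ S} = r * (#N).choose r := by
  cases r with
  | zero => simp
  | succ r =>
    have h_count : #{S ∈ N.powersetCard (r + 1) | x ∈ S} = (#N - 1).choose r := by
      simpa using card_filter_powersetCard_subset {x} N (r + 1) (by simpa) (by simp)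
    obtain ⟨c, hc⟩ : ∃ c, #N = c + 1 := Nat.exists_eq_add_one.2 (card_pos.2 ⟨x, hx⟩)
    rw [h_count, hc, Nat.add_sub_cancel, Nat.add_one_mul_choose_eq, mul_comm]

theorem sum_sum_eq_sum_card_filter_mem_nsmul {α M : Type*} [DecidableEq α] [AddCommMonoid M]
    {𝒜 : Finset (Finset α)} {N : Finset α} (h𝒜 : ∀ S ∈ 𝒜, S ⊆ N) (φ : α → M) :
    ∑ S ∈ 𝒜, ∑ x ∈ S, φ x = ∑ x ∈ N, #{S ∈ 𝒜 | x ∈ S} • φ x := by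
  rw [sum_comm' (t' := N) (s' := fun x ↦ {S ∈ 𝒜 | x ∈ S})]
  · simp only [sum_const]
  · intro S x
    rw [mem_filter]
    exact ⟨fun h ↦ ⟨h, h𝒜 S h.1 h.2⟩, And.left⟩

theorem expect_powersetCard_sum {α K : Type*} [Semifield K] [CharZero K] {N : Finset α} {r : ℕ}
    (hr : r ≤ #N) (φ : α → K) :
    𝔼 S ∈ N.powersetCard r, ∑ x ∈ S, φ x = (r / #N : K) * ∑ x ∈ N, φ x := by
  classical
  have h_choose : ((#N).choose r : K) ≠ 0 := mod_cast (Nat.choose_pos hr).ne'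
  rw [expect_eq_sum_div_card, card_powersetCard, sum_sum_eq_sum_card_filter_mem_nsmul
    (fun S hS ↦ (mem_powersetCard.1 hS).1), sum_div, mul_sum]
  refine sum_congr rfl fun x hx ↦ ?_
  have h_card : (#N : K) ≠ 0 := mod_cast card_ne_zero_of_mem hx
  have h_count : (#N * #{S ∈ N.powersetCard r | x ∈ S} : K) = r * (#N).choose r :=
    mod_cast card_mul_card_filter_mem_powersetCard hx r
  have h_prob : (#{S ∈ N.powersetCard r | x ∈ S} / (#N).choose r : K) = r / #N := by
    rw [div_eq_div_iff h_choose h_card, mul_comm, h_count]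
  rw [nsmul_eq_mul, mul_div_right_comm, h_prob]

theorem supermodular_expected_interaction_difference_nonneg_general
    {α K : Type*} [DecidableEq α] [Field K] [LinearOrder K] [IsStrictOrderedRing K]
    {V : Finset α → K} (hV : IsSupermodular V) {N : Finset α} {r : ℕ} (hr : r ≤ #N) :
    𝔼 S ∈ N.powersetCard r, V S ≤ V ∅ + (r / #N : K) * (V N - V ∅) := by
  obtain ⟨φ, h_le, h_eq⟩ := hV.exists_le_add_sum_and_eq_add_sum N
  calc 𝔼 S ∈ N.powersetCard r, V S
      ≤ 𝔼 S ∈ N.powersetCard r, (V ∅ + ∑ x ∈ S, φ x) :=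
        expect_le_expect fun S hS ↦ h_le S (mem_powersetCard.1 hS).1
    _ = V ∅ + (r / #N : K) * ∑ x ∈ N, φ x := by
        rw [expect_add_distrib, expect_const (powersetCard_nonempty.2 hr),
          expect_powersetCard_sum hr]
    _ = V ∅ + (r / #N : K) * (V N - V ∅) := by rw [h_eq, add_sub_cancel_left]

/-- For a supermodular `V` with `V ∅ = 0`, the expected value of a uniformly
random `r`-subset is at most the proportional share `(r/c)·V(N)`; hence the
expected interaction difference `ΔI = (r/c)·V(N) − E[V(S)]` is nonnegative. -/
theorem supermodular_expected_interaction_difference_nonneg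
    {α : Type*} [Fintype α] [DecidableEq α] (r : ℕ) (hr : r ≤ Fintype.card α)
    (V : Finset α → ℝ) (hV0 : V ∅ = 0)
    (hsuper : ∀ A B : Finset α, V A + V B ≤ V (A ∪ B) + V (A ∩ B)) :
    (∑ S ∈ Finset.univ.powersetCard r, V S) / (((Fintype.card α).choose r : ℝ)) ≤
      ((r : ℝ) / (Fintype.card α : ℝ)) * V Finset.univ ∧
    0 ≤ ((r : ℝ) / (Fintype.card α : ℝ)) * V Finset.univ -
      (∑ S ∈ Finset.univ.powersetCard r, V S) / (((Fintype.card α).choose r : ℝ)) := by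
  rw [sub_nonneg, and_self]
  simpa [expect_eq_sum_div_card, hV0] using
    supermodular_expected_interaction_difference_nonneg_general hsuper (N := univ) hr
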